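/- arXiv:2508.05885 — 7 statements merged into one kernel-verified Lean document; each statement's English description precedes it below -/
import Mathlib

section
/- Let J be a 2-step complex structure on a 2-step nilpotent Lie algebra 𝔫 such that (𝔫,J) has no complex abelian factor. If 𝔷₀ is any J-invariant ideal of 𝔫 with 𝔫'⊆𝔷₀⊆𝔷, then 𝔷₀ = 𝔫' + J𝔫'. -/
variable {L : Type*} [LieRing L] [LieAlgebra ℝ L]

/-- A complex structure on a real Lie algebra: `J² = -1` and vanishing Nijenhuis tensor. -/
def IsComplexStructure (J : L →ₗ[ℝ] L) : Prop :=
  (∀ x : L, J (J x) = -x) ∧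
    ∀ x y : L, ⁅x, y⁆ + J (⁅J x, y⁆ + ⁅x, J y⁆) - ⁅J x, J y⁆ = 0

/-- Right bracket by `y`, as a linear map `x ↦ ⁅x, y⁆`. -/
def bracketRight (y : L) : L →ₗ[ℝ] L where
  toFun x := ⁅x, y⁆
  map_add' a b := add_lie a b y
  map_smul' r a := smul_lie r a y

/-- The ascending series `𝔞_ℓ(J)` associated to a complex structure `J`. -/
def aSeries (J : L →ₗ[ℝ] L) : ℕ → Submodule ℝ L
  | 0 => ⊥
  | n + 1 =>
    (⨅ y : L, (aSeries J n).comap (bracketRight y)) ⊓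
      (⨅ y : L, (aSeries J n).comap ((bracketRight y).comp J))

/-- The commutator ideal `𝔫' = [𝔫,𝔫]`. -/
def commutatorIdeal (L : Type*) [LieRing L] [LieAlgebra ℝ L] : LieIdeal ℝ L :=
  ⁅(⊤ : LieIdeal ℝ L), (⊤ : LieIdeal ℝ L)⁆

/-- `(𝔫, J)` has no complex abelian factor. -/
def HasNoComplexAbelianFactor (J : L →ₗ[ℝ] L) : Prop :=
  ∀ a n₁ : LieIdeal ℝ L,
    Submodule.map J (a : Submodule ℝ L) ≤ (a : Submodule ℝ L) →
    ⁅a, a⁆ = (⊥ : LieIdeal ℝ L) →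
    Submodule.map J (n₁ : Submodule ℝ L) ≤ (n₁ : Submodule ℝ L) →
    IsCompl (a : Submodule ℝ L) (n₁ : Submodule ℝ L) →
    a = ⊥

/-!
Since `J² = -1`, the endomorphism `J` is semisimple, so `W = 𝔫' + J𝔫'` has a `J`-invariant
complement `A` in `𝔷₀`, and a `J`-invariant complement `C` of `𝔷₀` in `𝔫` yields
`𝔫 = A ⊕ (W ⊕ C)`. The first summand is an abelian ideal because it is central, the second is an
ideal because it contains `𝔫'`. So `A` is a complex abelian factor, hence zero, and `𝔷₀ = W`.
-/

section InvariantSubmodules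

open Module.End Polynomial

theorem isSemisimple_of_pow_eq_algebraMap {K M : Type*} [Field K] [AddCommGroup M] [Module K M]
    {f : Module.End K M} {n : ℕ} {c : K} (hn : (n : K) ≠ 0) (hc : c ≠ 0)
    (hf : f ^ n = algebraMap K (Module.End K M) c) : f.IsSemisimple :=
  isSemisimple_of_squarefree_aeval_eq_zero (separable_X_pow_sub_C c hn hc).squarefree
    (by simp [hf])

theorem sup_map_mem_invtSubmodule {R M : Type*} [Semiring R] [AddCommMonoid M] [Module R M]
    {f : Module.End R M} {p : Submodule R M} (hp : p ∈ (f ^ 2).invtSubmodule) :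
    p ⊔ p.map f ∈ f.invtSubmodule := by
  rw [mem_invtSubmodule_iff_map_le] at hp ⊢
  rw [pow_two, Module.End.mul_eq_comp, Submodule.map_comp] at hp
  rw [Submodule.map_sup]
  exact sup_le le_sup_right (hp.trans le_sup_left)

theorem exists_isCompl_invtSubmodule_of_le {R M : Type*} [CommRing R] [AddCommGroup M] [Module R M]
    {f : Module.End R M} (hf : f.IsSemisimple) {W Z : Submodule R M}
    (hW : W ∈ f.invtSubmodule) (hZ : Z ∈ f.invtSubmodule) (hWZ : W ≤ Z) :
    ∃ A ∈ f.invtSubmodule, ∃ N ∈ f.invtSubmodule, IsCompl A N ∧ W ≤ N ∧ W ⊔ A = Z := by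
  obtain ⟨A, -, hA, hdisj, hsup⟩ := (isSemisimple_restrict_iff Z hZ).1 (hf.restrict hZ) W hW hWZ
  obtain ⟨C, hC, hZC⟩ := isSemisimple_iff.1 hf Z hZ
  rw [← hsup, sup_comm] at hZC
  exact ⟨A, hA, W ⊔ C, invtSubmodule.sup_mem hW hC,
    hdisj.symm.isCompl_sup_right_of_isCompl_sup_left hZC, le_sup_left, hsup⟩

end InvariantSubmodules

section Ideals

variable {R 𝔤 : Type*} [CommRing R] [LieRing 𝔤] [LieAlgebra R 𝔤] {p : Submodule R 𝔤}

theorem exists_lieIdeal_coe_eq_of_le_center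
    (hp : p ≤ (LieAlgebra.center R 𝔤 : Submodule R 𝔤)) :
    ∃ I : LieIdeal R 𝔤, (I : Submodule R 𝔤) = p := by
  refine (p.exists_lieSubmodule_coe_eq_iff 𝔤).2 fun x m hm => ?_
  rw [(LieModule.mem_maxTrivSubmodule R 𝔤 𝔤 m).1 (hp hm) x]
  exact p.zero_mem

theorem exists_lieIdeal_coe_eq_of_lie_top_top_le
    (hp : (⁅(⊤ : LieIdeal R 𝔤), (⊤ : LieIdeal R 𝔤)⁆ : LieIdeal R 𝔤) ≤ p) :
    ∃ I : LieIdeal R 𝔤, (I : Submodule R 𝔤) = p :=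
  (p.exists_lieSubmodule_coe_eq_iff 𝔤).2 fun x m _ =>
    hp (LieSubmodule.lie_mem_lie (LieSubmodule.mem_top x) (LieSubmodule.mem_top m))

theorem lie_self_eq_bot_of_le_center {I : LieIdeal R 𝔤} (hI : I ≤ LieAlgebra.center R 𝔤) :
    ⁅I, I⁆ = ⊥ :=
  (LieSubmodule.lie_abelian_iff_lie_self_eq_bot I).1 (LieAlgebra.abelian_of_le_center R 𝔤 I hI)

end Ideals

theorem HasNoComplexAbelianFactor.eq_of_commutatorIdeal_le_of_le_center {J : L →ₗ[ℝ] L}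
    (hfac : HasNoComplexAbelianFactor J) (hJ : Module.End.IsSemisimple J) {W Z : Submodule ℝ L}
    (hW : W ∈ Module.End.invtSubmodule J) (hZ : Z ∈ Module.End.invtSubmodule J)
    (hcomm : (commutatorIdeal L : Submodule ℝ L) ≤ W) (hWZ : W ≤ Z)
    (hcenter : Z ≤ (LieAlgebra.center ℝ L : Submodule ℝ L)) : W = Z := by
  obtain ⟨A, hA, N, hN, hAN, hWN, hWA⟩ := exists_isCompl_invtSubmodule_of_le hJ hW hZ hWZ
  have hA_center : A ≤ (LieAlgebra.center ℝ L : Submodule ℝ L) :=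
    (le_sup_right.trans hWA.le).trans hcenter
  obtain ⟨a, rfl⟩ := exists_lieIdeal_coe_eq_of_le_center hA_center
  obtain ⟨n₁, rfl⟩ := exists_lieIdeal_coe_eq_of_lie_top_top_le (hcomm.trans hWN)
  have ha : a = ⊥ :=
    hfac a n₁ ((Module.End.mem_invtSubmodule_iff_map_le J).1 hA)
      (lie_self_eq_bot_of_le_center hA_center)
      ((Module.End.mem_invtSubmodule_iff_map_le J).1 hN) hAN
  simpa [ha] using hWA

theorem j_invariant_ideal_eq_commutator_sup_J_commutator_general
    {J : L →ₗ[ℝ] L} (hJ : ∀ x : L, J (J x) = -x) (hfac : HasNoComplexAbelianFactor J)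
    {z₀ : LieIdeal ℝ L}
    (hz₀J : Submodule.map J (z₀ : Submodule ℝ L) ≤ (z₀ : Submodule ℝ L))
    (hz₀l : commutatorIdeal L ≤ z₀) (hz₀u : z₀ ≤ LieAlgebra.center ℝ L) :
    (z₀ : Submodule ℝ L) =
      (commutatorIdeal L : Submodule ℝ L) ⊔
        Submodule.map J (commutatorIdeal L : Submodule ℝ L) := by
  have hJ_sq : (J : Module.End ℝ L) ^ 2 = algebraMap ℝ (Module.End ℝ L) (-1) := by
    ext x
    simp [pow_two, hJ]
  have hJ_semisimple : Module.End.IsSemisimple J :=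
    isSemisimple_of_pow_eq_algebraMap (by norm_num) (by norm_num) hJ_sq
  have hcomm_invt : (commutatorIdeal L : Submodule ℝ L) ∈
      Module.End.invtSubmodule ((J : Module.End ℝ L) ^ 2) := by
    rw [hJ_sq]
    exact fun x hx => Submodule.smul_mem _ _ hx
  exact (hfac.eq_of_commutatorIdeal_le_of_le_center hJ_semisimple
    (sup_map_mem_invtSubmodule hcomm_invt)
    ((Module.End.mem_invtSubmodule_iff_map_le J).2 hz₀J) le_sup_left
    (sup_le hz₀l ((Submodule.map_mono hz₀l).trans hz₀J)) hz₀u).symm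

/-- for a 2-step complex structure without complex abelian factor, any
`J`-invariant ideal squeezed between `𝔫'` and `𝔷` equals `𝔫' + J𝔫'`. -/
theorem j_invariant_ideal_eq_commutator_sup_J_commutator
    (h2 : commutatorIdeal L ≤ LieAlgebra.center ℝ L)
    (hna : commutatorIdeal L ≠ ⊥)
    (J : L →ₗ[ℝ] L) (hJ : IsComplexStructure J)
    (hJ2 : Submodule.map J (commutatorIdeal L : Submodule ℝ L) ≤
      (LieAlgebra.center ℝ L : Submodule ℝ L))
    (hfac : HasNoComplexAbelianFactor J)
    (z₀ : LieIdeal ℝ L)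
    (hz₀J : Submodule.map J (z₀ : Submodule ℝ L) ≤ (z₀ : Submodule ℝ L))
    (hz₀l : commutatorIdeal L ≤ z₀) (hz₀u : z₀ ≤ LieAlgebra.center ℝ L) :
    (z₀ : Submodule ℝ L) =
      (commutatorIdeal L : Submodule ℝ L) ⊔
        Submodule.map J (commutatorIdeal L : Submodule ℝ L) := by
  exact j_invariant_ideal_eq_commutator_sup_J_commutator_general hJ.1 hfac hz₀J hz₀l hz₀u
end

section
/- Let 𝔫 be a 2-step nilpotent Lie algebra. If J is an abelian complex structure on 𝔫 (i.e., [Jx,Jy]=[x,y] for all x,y) or a bi-invariant complex structure (i.e., J[x,y]=[x,Jy] for all x,y), then J is 2-step, i.e., J𝔫'⊆𝔷. -/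
variable {L : Type*} [LieRing L] [LieAlgebra ℝ L]

section Center

variable {R 𝔤 M N : Type*} [CommRing R] [LieRing 𝔤] [LieAlgebra R 𝔤]

theorem map_maxTrivSubmodule_le_of_map_lie
    [AddCommGroup M] [Module R M] [LieRingModule 𝔤 M] [LieModule R 𝔤 M]
    [AddCommGroup N] [Module R N] [LieRingModule 𝔤 N] [LieModule R 𝔤 N]
    {f : M →ₗ[R] N} (hf : ∀ (x : 𝔤) (m : M), f ⁅x, m⁆ = ⁅x, f m⁆) :
    Submodule.map f (LieModule.maxTrivSubmodule R 𝔤 M : Submodule R M) ≤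
      (LieModule.maxTrivSubmodule R 𝔤 N : Submodule R N) := by
  rintro _ ⟨m, hm, rfl⟩
  exact (LieModule.maxTrivHom { f with map_lie' := hf _ _ } ⟨m, hm⟩).property

theorem map_center_le_of_lie_map_map {J : 𝔤 →ₗ[R] 𝔤} (hJ : Function.Surjective J)
    (hlie : ∀ x y : 𝔤, ⁅J x, J y⁆ = ⁅x, y⁆) :
    Submodule.map J (LieAlgebra.center R 𝔤 : Submodule R 𝔤) ≤
      (LieAlgebra.center R 𝔤 : Submodule R 𝔤) := by
  rintro _ ⟨z, hz, rfl⟩ w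
  obtain ⟨x, rfl⟩ := hJ w
  rw [hlie, hz x]

theorem abelian_or_biinvariant_complex_structure_is_two_step_general
    {J : 𝔤 →ₗ[R] 𝔤} (hJ : Function.Surjective J)
    (h : (∀ x y : 𝔤, ⁅J x, J y⁆ = ⁅x, y⁆) ∨ (∀ x y : 𝔤, J ⁅x, y⁆ = ⁅x, J y⁆)) :
    Submodule.map J (LieAlgebra.center R 𝔤 : Submodule R 𝔤) ≤
      (LieAlgebra.center R 𝔤 : Submodule R 𝔤) :=
  h.elim (map_center_le_of_lie_map_map hJ) map_maxTrivSubmodule_le_of_map_lie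

end Center

theorem IsComplexStructure.surjective {J : L →ₗ[ℝ] L} (hJ : IsComplexStructure J) :
    Function.Surjective J :=
  fun x => ⟨-J x, by rw [map_neg, hJ.1, neg_neg]⟩

/-- on a 2-step nilpotent Lie algebra, any abelian or bi-invariant
complex structure is 2-step, i.e. `J𝔫' ⊆ 𝔷`. -/
theorem abelian_or_biinvariant_complex_structure_is_two_step
    (h2 : commutatorIdeal L ≤ LieAlgebra.center ℝ L)
    (hna : commutatorIdeal L ≠ ⊥)
    (J : L →ₗ[ℝ] L) (hJ : IsComplexStructure J)
    (h : (∀ x y : L, ⁅J x, J y⁆ = ⁅x, y⁆) ∨ (∀ x y : L, J ⁅x, y⁆ = ⁅x, J y⁆)) :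
    Submodule.map J (commutatorIdeal L : Submodule ℝ L) ≤
      (LieAlgebra.center ℝ L : Submodule ℝ L) := by
  exact (Submodule.map_mono h2).trans
    (abelian_or_biinvariant_complex_structure_is_two_step_general hJ.surjective h)
end

section
/- Let 𝔫 be a 2-step nilpotent Lie algebra with a complex structure J, with center 𝔷 and commutator 𝔫'. If 𝔷₀ is an ideal of 𝔫 such that 𝔫'⊆𝔷₀⊆𝔷, then J𝔷₀ is an abelian ideal of 𝔫. -/
variable {L : Type*} [LieRing L] [LieAlgebra ℝ L]

section NijenhuisOperator

variable {R 𝔤 : Type*} [CommRing R] [LieRing 𝔤] [LieAlgebra R 𝔤]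

/-- A Nijenhuis operator on a Lie algebra: an endomorphism `J` whose Nijenhuis torsion vanishes.
It isolates the integrability condition of a complex structure; the torsion is written with
`J (J ⁅x, y⁆)` in place of `-⁅x, y⁆`, so that `J² = -1` is not presupposed. -/
def IsNijenhuisOperator (J : 𝔤 →ₗ[R] 𝔤) : Prop :=
  ∀ x y : 𝔤, ⁅J x, J y⁆ = J (⁅J x, y⁆ + ⁅x, J y⁆) - J (J ⁅x, y⁆)

namespace IsNijenhuisOperator

variable {J : 𝔤 →ₗ[R] 𝔤}

theorem lie_map_map_of_mem_center (hJ : IsNijenhuisOperator J) (x : 𝔤) {z : 𝔤}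
    (hz : z ∈ LieAlgebra.center R 𝔤) : ⁅J x, J z⁆ = J ⁅x, J z⁆ := by
  have lie_z (y : 𝔤) : ⁅y, z⁆ = 0 := (LieModule.mem_maxTrivSubmodule R 𝔤 𝔤 z).1 hz y
  simpa [lie_z] using hJ x z

theorem lie_map_map_eq_zero_of_mem_center (hJ : IsNijenhuisOperator J) {w z : 𝔤}
    (hw : w ∈ LieAlgebra.center R 𝔤) (hz : z ∈ LieAlgebra.center R 𝔤) : ⁅J w, J z⁆ = 0 := by
  have w_lie : ⁅w, J z⁆ = 0 := by
    rw [← lie_skew, (LieModule.mem_maxTrivSubmodule R 𝔤 𝔤 w).1 hw, neg_zero]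
  rw [hJ.lie_map_map_of_mem_center w hz, w_lie, map_zero]

end IsNijenhuisOperator

theorem map_J_central_ideal_is_abelian_ideal_general {J : 𝔤 →ₗ[R] 𝔤}
    (hJ : IsNijenhuisOperator J) (hJ_surj : Function.Surjective J) {z₀ : LieIdeal R 𝔤}
    (hz₀l : ⁅(⊤ : LieIdeal R 𝔤), (⊤ : LieIdeal R 𝔤)⁆ ≤ z₀)
    (hz₀u : z₀ ≤ LieAlgebra.center R 𝔤) :
    (∀ x : 𝔤, ∀ y ∈ Submodule.map J (z₀ : Submodule R 𝔤),
        ⁅x, y⁆ ∈ Submodule.map J (z₀ : Submodule R 𝔤)) ∧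
      (∀ x ∈ Submodule.map J (z₀ : Submodule R 𝔤),
        ∀ y ∈ Submodule.map J (z₀ : Submodule R 𝔤), ⁅x, y⁆ = 0) := by
  constructor
  · rintro x _ ⟨z, hz, rfl⟩
    obtain ⟨x, rfl⟩ := hJ_surj x
    rw [hJ.lie_map_map_of_mem_center x (hz₀u hz)]
    exact Submodule.mem_map_of_mem
      (hz₀l (LieSubmodule.lie_mem_lie (LieSubmodule.mem_top x) (LieSubmodule.mem_top (J z))))
  · rintro _ ⟨w, hw, rfl⟩ _ ⟨z, hz, rfl⟩
    exact hJ.lie_map_map_eq_zero_of_mem_center (hz₀u hw) (hz₀u hz)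

end NijenhuisOperator

namespace IsComplexStructure

variable {J : L →ₗ[ℝ] L}

theorem surjective_s4 (hJ : IsComplexStructure J) : Function.Surjective J :=
  fun x => ⟨-J x, by rw [map_neg, hJ.1, neg_neg]⟩

theorem isNijenhuisOperator (hJ : IsComplexStructure J) : IsNijenhuisOperator J := by
  intro x y
  rw [hJ.1 ⁅x, y⁆, sub_neg_eq_add, add_comm]
  exact (sub_eq_zero.1 (hJ.2 x y)).symm

end IsComplexStructure

/-- if `𝔫' ⊆ 𝔷₀ ⊆ 𝔷` is an ideal of a 2-step nilpotent Lie algebra with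
complex structure `J`, then `J𝔷₀` is an abelian ideal. -/
theorem map_J_central_ideal_is_abelian_ideal
    (h2 : commutatorIdeal L ≤ LieAlgebra.center ℝ L)
    (hna : commutatorIdeal L ≠ ⊥)
    (J : L →ₗ[ℝ] L) (hJ : IsComplexStructure J)
    (z₀ : LieIdeal ℝ L)
    (hz₀l : commutatorIdeal L ≤ z₀) (hz₀u : z₀ ≤ LieAlgebra.center ℝ L) :
    (∀ x : L, ∀ y ∈ Submodule.map J (z₀ : Submodule ℝ L),
        ⁅x, y⁆ ∈ Submodule.map J (z₀ : Submodule ℝ L)) ∧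
      (∀ x ∈ Submodule.map J (z₀ : Submodule ℝ L),
        ∀ y ∈ Submodule.map J (z₀ : Submodule ℝ L), ⁅x, y⁆ = 0) :=
  map_J_central_ideal_is_abelian_ideal_general hJ.isNijenhuisOperator hJ.surjective_s4 hz₀l hz₀u
end

section
/- Let 𝔫 be a 2-step nilpotent Lie algebra. Then any complex structure J on 𝔫 satisfies J𝔷∩𝔷≠0 (J is not strongly non-nilpotent). In particular dim 𝔷 ≥ 2. -/
variable {L : Type*} [LieRing L] [LieAlgebra ℝ L]

/-!
Let `𝔫'` be the commutator ideal and put `w = ⁅J x, y⁆ + ⁅x, J y⁆`. Integrability says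
`J w = ⁅J x, J y⁆ - ⁅x, y⁆`, so both `w` and `J w` lie in `𝔫' ⊆ 𝔷`. If `w ≠ 0` for some `x, y`,
take `v = w`. Otherwise `⁅J x, y⁆ = -⁅x, J y⁆` for all `x, y`, so `J` preserves `𝔷`, and any nonzero
`v ∈ 𝔫'` will do. In both cases `v` and `J v` are nonzero vectors of `𝔷`, and they are linearly
independent because `-1` is not a square.
-/

section LinearAlgebra

variable {K V : Type*} [Field K] [AddCommGroup V] [Module K V] {J : V →ₗ[K] V} {v : V}

theorem linearIndependent_pair_apply_of_apply_apply_eq_neg (hK : ¬IsSquare (-1 : K))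
    (hJv : J (J v) = -v) (hv : v ≠ 0) : LinearIndependent K ![v, J v] := by
  refine (LinearIndependent.pair_iff' hv).2 fun a ha ↦ hK ⟨a, ?_⟩
  refine smul_left_injective K hv ?_
  calc (-1 : K) • v = J (J v) := by rw [hJv, neg_one_smul]
    _ = (a * a) • v := by rw [← ha, map_smul, ← ha, mul_smul]

theorem two_le_rank_of_mem_of_apply_mem (hK : ¬IsSquare (-1 : K)) (hJv : J (J v) = -v)
    (hv : v ≠ 0) {W : Submodule K V} (hvW : v ∈ W) (hJvW : J v ∈ W) : 2 ≤ Module.rank K W := by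
  have hindep : LinearIndependent K ![(⟨v, hvW⟩ : W), ⟨J v, hJvW⟩] := by
    refine .of_comp W.subtype ?_
    convert linearIndependent_pair_apply_of_apply_apply_eq_neg hK hJv hv using 1
    ext i
    fin_cases i <;> rfl
  simpa using hindep.cardinal_lift_le_rank

end LinearAlgebra

section LieAlgebra

variable {R 𝔫 : Type*} [CommRing R] [LieRing 𝔫] [LieAlgebra R 𝔫] {J : 𝔫 →ₗ[R] 𝔫}

theorem apply_mem_center_of_lie_apply_add_lie_apply_eq_zero
    (hskew : ∀ x y : 𝔫, ⁅J x, y⁆ + ⁅x, J y⁆ = 0) {v : 𝔫} (hv : v ∈ LieAlgebra.center R 𝔫) :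
    J v ∈ LieAlgebra.center R 𝔫 := by
  rw [LieModule.mem_maxTrivSubmodule] at hv ⊢
  intro x
  simpa only [hv, zero_add] using hskew x v

theorem exists_mem_commutator_ne_zero_apply_mem_center
    (hcentral : ⁅(⊤ : LieIdeal R 𝔫), (⊤ : LieIdeal R 𝔫)⁆ ≤ LieAlgebra.center R 𝔫)
    (hnonabelian : ⁅(⊤ : LieIdeal R 𝔫), (⊤ : LieIdeal R 𝔫)⁆ ≠ ⊥)
    (hNijenhuis : ∀ x y : 𝔫, ⁅x, y⁆ + J (⁅J x, y⁆ + ⁅x, J y⁆) - ⁅J x, J y⁆ = 0) :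
    ∃ v ∈ ⁅(⊤ : LieIdeal R 𝔫), (⊤ : LieIdeal R 𝔫)⁆, v ≠ 0 ∧ J v ∈ LieAlgebra.center R 𝔫 := by
  have lie_mem (x y : 𝔫) : ⁅x, y⁆ ∈ ⁅(⊤ : LieIdeal R 𝔫), (⊤ : LieIdeal R 𝔫)⁆ :=
    LieSubmodule.lie_mem_lie (LieSubmodule.mem_top x) (LieSubmodule.mem_top y)
  by_cases hskew : ∀ x y : 𝔫, ⁅J x, y⁆ + ⁅x, J y⁆ = 0
  · obtain ⟨v, hv, hv0⟩ := Submodule.exists_mem_ne_zero_of_ne_bot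
      ((LieSubmodule.toSubmodule_eq_bot _).not.2 hnonabelian)
    exact ⟨v, hv, hv0, apply_mem_center_of_lie_apply_add_lie_apply_eq_zero hskew (hcentral hv)⟩
  · push Not at hskew
    obtain ⟨x, y, hxy⟩ := hskew
    have hJxy : J (⁅J x, y⁆ + ⁅x, J y⁆) = ⁅J x, J y⁆ - ⁅x, y⁆ :=
      eq_sub_of_add_eq' (sub_eq_zero.1 (hNijenhuis x y))
    refine ⟨_, add_mem (lie_mem _ _) (lie_mem _ _), hxy, ?_⟩
    rw [hJxy]
    exact hcentral (sub_mem (lie_mem _ _) (lie_mem _ _))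

end LieAlgebra

theorem complex_structure_not_strongly_non_nilpotent_general
    {K 𝔫 : Type*} [Field K] [LieRing 𝔫] [LieAlgebra K 𝔫] (hK : ¬IsSquare (-1 : K))
    (hcentral : ⁅(⊤ : LieIdeal K 𝔫), (⊤ : LieIdeal K 𝔫)⁆ ≤ LieAlgebra.center K 𝔫)
    (hnonabelian : ⁅(⊤ : LieIdeal K 𝔫), (⊤ : LieIdeal K 𝔫)⁆ ≠ ⊥)
    (J : 𝔫 →ₗ[K] 𝔫) (hJ : ∀ x : 𝔫, J (J x) = -x)
    (hNijenhuis : ∀ x y : 𝔫, ⁅x, y⁆ + J (⁅J x, y⁆ + ⁅x, J y⁆) - ⁅J x, J y⁆ = 0) :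
    Submodule.map J (⁅(⊤ : LieIdeal K 𝔫), (⊤ : LieIdeal K 𝔫)⁆ : LieIdeal K 𝔫).toSubmodule ⊓
        (LieAlgebra.center K 𝔫).toSubmodule ≠ ⊥ ∧
      2 ≤ Module.rank K (LieAlgebra.center K 𝔫) := by
  obtain ⟨v, hv, hv0, hJv⟩ :=
    exists_mem_commutator_ne_zero_apply_mem_center hcentral hnonabelian hNijenhuis
  have hJv0 : J v ≠ 0 := fun h ↦ hv0 (by simpa [h] using hJ v)
  exact ⟨(Submodule.ne_bot_iff _).2 ⟨J v, ⟨Submodule.mem_map_of_mem hv, hJv⟩, hJv0⟩,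
    two_le_rank_of_mem_of_apply_mem hK (hJ v) hv0 (hcentral hv) hJv⟩

/-- no complex structure on a 2-step nilpotent Lie algebra is strongly
non-nilpotent: `J𝔷 ∩ 𝔷 ≠ 0`; in particular `dim 𝔷 ≥ 2`. -/
theorem complex_structure_not_strongly_non_nilpotent
    [FiniteDimensional ℝ L]
    (h2 : commutatorIdeal L ≤ LieAlgebra.center ℝ L)
    (hna : commutatorIdeal L ≠ ⊥)
    (J : L →ₗ[ℝ] L) (hJ : IsComplexStructure J) :
    Submodule.map J (LieAlgebra.center ℝ L : Submodule ℝ L) ⊓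
        (LieAlgebra.center ℝ L : Submodule ℝ L) ≠ ⊥ ∧
      2 ≤ Module.finrank ℝ (LieAlgebra.center ℝ L) := by
  obtain ⟨hinf, hrank⟩ := complex_structure_not_strongly_non_nilpotent_general
    (by simp) h2 hna J hJ.1 hJ.2
  exact ⟨ne_bot_of_le_ne_bot hinf (inf_le_inf_right _ (Submodule.map_mono h2)),
    by rwa [← Module.finrank_eq_rank, Nat.ofNat_le_cast] at hrank⟩
end

section
/- Let J be a 3-step complex structure on a 2-step nilpotent Lie algebra 𝔫. Then 𝔫'∩J𝔫' ≠ 0. -/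
variable {L : Type*} [LieRing L] [LieAlgebra ℝ L]

/-!
If `z` is central, the vanishing of the Nijenhuis tensor at `(z, y)` reduces to
`⁅J z, J y⁆ = J ⁅J z, y⁆`. Since `J² = -1`, this puts every bracket `⁅J z, y⁆` in `𝔫' ∩ J𝔫'`. If
that intersection is zero, then `J` maps the center, and with it `𝔫'`, into the center.
-/

theorem lie_mem_commutatorIdeal (x y : L) : ⁅x, y⁆ ∈ commutatorIdeal L :=
  LieSubmodule.lie_mem_lie (LieSubmodule.mem_top x) (LieSubmodule.mem_top y)

namespace IsComplexStructure

variable {J : L →ₗ[ℝ] L}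

theorem lie_map_map_of_lie_eq_zero (hJ : IsComplexStructure J) {z y : L}
    (hzy : ⁅z, y⁆ = 0) (hzJy : ⁅z, J y⁆ = 0) : ⁅J z, J y⁆ = J ⁅J z, y⁆ := by
  have nijenhuis_eq_zero := hJ.2 z y
  rw [hzy, hzJy, add_zero, zero_add] at nijenhuis_eq_zero
  exact (sub_eq_zero.mp nijenhuis_eq_zero).symm

theorem lie_map_mem_inf_of_lie_eq_zero (hJ : IsComplexStructure J) {z y : L}
    (hzy : ⁅z, y⁆ = 0) (hzJy : ⁅z, J y⁆ = 0) :
    ⁅J z, y⁆ ∈ (commutatorIdeal L : Submodule ℝ L) ⊓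
      Submodule.map J (commutatorIdeal L : Submodule ℝ L) := by
  have map_lie : J ⁅J z, J y⁆ = -⁅J z, y⁆ := by
    rw [hJ.lie_map_map_of_lie_eq_zero hzy hzJy, hJ.1]
  refine ⟨lie_mem_commutatorIdeal _ _, -⁅J z, J y⁆, ?_, ?_⟩
  · exact neg_mem (lie_mem_commutatorIdeal _ _)
  · rw [map_neg, map_lie, neg_neg]

end IsComplexStructure

theorem three_step_inter_ne_bot_general {J : L →ₗ[ℝ] L} (hJ : IsComplexStructure J)
    (hcenter : ¬ Submodule.map J (LieAlgebra.center ℝ L : Submodule ℝ L) ≤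
      (LieAlgebra.center ℝ L : Submodule ℝ L)) :
    (commutatorIdeal L : Submodule ℝ L) ⊓
        Submodule.map J (commutatorIdeal L : Submodule ℝ L) ≠ ⊥ := by
  intro hinf
  apply hcenter
  rintro _ ⟨z, hz, rfl⟩
  have lie_z (y : L) : ⁅z, y⁆ = 0 := by rw [← lie_skew, hz y, neg_zero]
  have lie_Jz (y : L) : ⁅J z, y⁆ = 0 := by
    rw [← Submodule.mem_bot ℝ, ← hinf]
    exact hJ.lie_map_mem_inf_of_lie_eq_zero (lie_z y) (lie_z (J y))
  exact fun y => by rw [← lie_skew, lie_Jz, neg_zero]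

/-- a 3-step complex structure `J` on a 2-step nilpotent Lie algebra
satisfies `𝔫' ∩ J𝔫' ≠ 0`. -/
theorem three_step_inter_ne_bot
    (h2 : commutatorIdeal L ≤ LieAlgebra.center ℝ L)
    (hna : commutatorIdeal L ≠ ⊥)
    (J : L →ₗ[ℝ] L) (hJ : IsComplexStructure J)
    (hJ3 : ¬ Submodule.map J (commutatorIdeal L : Submodule ℝ L) ≤
      (LieAlgebra.center ℝ L : Submodule ℝ L)) :
    (commutatorIdeal L : Submodule ℝ L) ⊓
        Submodule.map J (commutatorIdeal L : Submodule ℝ L) ≠ ⊥ := by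
  exact three_step_inter_ne_bot_general hJ fun hcenter =>
    hJ3 ((Submodule.map_mono h2).trans hcenter)
end

section
/- Let 𝔫 be a 2-step nilpotent Lie algebra such that 𝔫'=𝔷 and dim 𝔫' is odd. Then any complex structure on 𝔫 is 3-step, i.e., J𝔫'⊄𝔷. -/
variable {L : Type*} [LieRing L] [LieAlgebra ℝ L]

section Module

variable {R M : Type*} [CommRing R] [AddCommGroup M] [Module R M]

/-- If `M` is not finite, then `finrank R M = 0` and the conclusion carries no information. -/
theorem even_finrank_of_mul_self_eq_neg_one [Module.Free R M] (hR : ¬ IsSquare (-1 : R))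
    {J : Module.End R M} (hJ : J * J = -1) : Even (Module.finrank R M) := by
  have det_mul_self : J.det * J.det = (-1) ^ Module.finrank R M := by
    rw [← map_mul, hJ, ← neg_one_smul R, LinearMap.det_smul, map_one, mul_one]
  by_contra hM
  rw [(Nat.not_even_iff_odd.mp hM).neg_one_pow] at det_mul_self
  exact hR ⟨J.det, det_mul_self.symm⟩

theorem even_finrank_of_map_le_of_mul_self_eq_neg_one (hR : ¬ IsSquare (-1 : R))
    {J : Module.End R M} (hJ : J * J = -1) {W : Submodule R M} [Module.Free R W]
    (hW : W.map J ≤ W) : Even (Module.finrank R W) := by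
  have apply_mem : ∀ x ∈ W, J x ∈ W := fun x hx => hW (Submodule.mem_map_of_mem hx)
  have restrict_mul_self : J.restrict apply_mem * J.restrict apply_mem = -1 :=
    LinearMap.ext fun x => Subtype.ext (LinearMap.congr_fun hJ x)
  exact even_finrank_of_mul_self_eq_neg_one hR restrict_mul_self

end Module

theorem IsComplexStructure.mul_self_eq_neg_one {J : Module.End ℝ L} (hJ : IsComplexStructure J) :
    J * J = -1 :=
  LinearMap.ext hJ.1

theorem complex_structure_is_three_step_of_odd_commutator_eq_center_general
    {R N : Type*} [CommRing R] [LieRing N] [LieAlgebra R N] (hR : ¬ IsSquare (-1 : R))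
    {J : Module.End R N} (hJ : J * J = -1) {W : Submodule R N} [Module.Free R W]
    (hcenter : (LieAlgebra.center R N).toSubmodule ≤ W) (hodd : Odd (Module.finrank R W)) :
    ¬ W.map J ≤ (LieAlgebra.center R N).toSubmodule := fun map_le_center =>
  Nat.not_even_iff_odd.mpr hodd <|
    even_finrank_of_map_le_of_mul_self_eq_neg_one hR hJ (map_le_center.trans hcenter)

/-- if `𝔫' = 𝔷` is odd-dimensional in a 2-step nilpotent Lie algebra,
every complex structure is 3-step: `J𝔫' ⊄ 𝔷`. -/
theorem complex_structure_is_three_step_of_odd_commutator_eq_center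
    [FiniteDimensional ℝ L]
    (h2 : commutatorIdeal L ≤ LieAlgebra.center ℝ L)
    (hna : commutatorIdeal L ≠ ⊥)
    (heq : (commutatorIdeal L : Submodule ℝ L) = (LieAlgebra.center ℝ L : Submodule ℝ L))
    (hodd : Odd (Module.finrank ℝ (commutatorIdeal L : Submodule ℝ L)))
    (J : L →ₗ[ℝ] L) (hJ : IsComplexStructure J) :
    ¬ Submodule.map J (commutatorIdeal L : Submodule ℝ L) ≤
      (LieAlgebra.center ℝ L : Submodule ℝ L) :=
  complex_structure_is_three_step_of_odd_commutator_eq_center_general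
    (not_isSquare_of_neg neg_one_lt_zero) hJ.mul_self_eq_neg_one heq.ge hodd
end

section
/- Let 𝔫 be a 2-step nilpotent Lie algebra with complex structure J. If J is 3-step (J𝔫'⊄𝔷), then no Hermitian metric on (𝔫,J) is pluriclosed. -/
variable {L : Type*} [LieRing L] [LieAlgebra ℝ L]

/-- A Hermitian inner product on `(L, J)`: a symmetric positive definite bilinear form
compatible with `J`. -/
def IsHermitianMetric (J : L →ₗ[ℝ] L) (B : LinearMap.BilinForm ℝ L) : Prop :=
  (∀ x y : L, B x y = B y x) ∧ (∀ x : L, x ≠ 0 → 0 < B x x) ∧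
    ∀ x y : L, B (J x) (J y) = B x y

/-- The exterior derivative of the torsion 3-form `c` of the Bismut connection of a
left invariant Hermitian structure, evaluated on `(w,u,y,z)` (formula (2.4) of the
paper). -/
def dcForm (J : L →ₗ[ℝ] L) (B : LinearMap.BilinForm ℝ L) (w u y z : L) : ℝ :=
  B ⁅J ⁅w, u⁆, J y⁆ z + B ⁅J y, J z⁆ ⁅w, u⁆ + B ⁅J z, J ⁅w, u⁆⁆ y
    - B ⁅J ⁅w, y⁆, J u⁆ z - B ⁅J u, J z⁆ ⁅w, y⁆ - B ⁅J z, J ⁅w, y⁆⁆ u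
    + B ⁅J ⁅w, z⁆, J u⁆ y + B ⁅J u, J y⁆ ⁅w, z⁆ + B ⁅J y, J ⁅w, z⁆⁆ u
    + B ⁅J ⁅u, y⁆, J w⁆ z + B ⁅J w, J z⁆ ⁅u, y⁆ + B ⁅J z, J ⁅u, y⁆⁆ w
    - B ⁅J ⁅u, z⁆, J w⁆ y - B ⁅J w, J y⁆ ⁅u, z⁆ - B ⁅J y, J ⁅u, z⁆⁆ w
    + B ⁅J ⁅y, z⁆, J w⁆ u + B ⁅J w, J u⁆ ⁅y, z⁆ + B ⁅J u, J ⁅y, z⁆⁆ w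

/-- The Hermitian metric `B` is pluriclosed (SKT) for `J`: `dc = 0`. -/
def IsPluriclosed (J : L →ₗ[ℝ] L) (B : LinearMap.BilinForm ℝ L) : Prop :=
  ∀ w u y z : L, dcForm J B w u y z = 0

/-!
Let `z` be central with `J z` in the second center (the normalizer of the center), and put
`a = ⁅x, J z⁆`. Integrability gives `⁅J x, J z⁆ = J a`, so of the eighteen terms of
`dc (x, J x, z, J z)` only `-⟨a, a⟩` and `-⟨J a, J a⟩` survive. A pluriclosed metric therefore
forces `a = 0` for every `x`. In the 2-step case the second center is everything, so `J` preserves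
the center.
-/

section SecondCenter

variable {R K M : Type*} [CommRing R] [LieRing K] [LieAlgebra R K]
  [AddCommGroup M] [Module R M] [LieRingModule K M] [LieModule R K M]

theorem lie_lie_eq_zero_of_mem_normalizer_maxTrivSubmodule {m : M}
    (hm : m ∈ (LieModule.maxTrivSubmodule R K M).normalizer) (x y : K) : ⁅⁅x, y⁆, m⁆ = 0 := by
  have lie_lie_zero (x y : K) : ⁅x, ⁅y, m⁆⁆ = 0 :=
    (LieModule.mem_maxTrivSubmodule R K M _).1 (hm y) x
  rw [lie_lie, lie_lie_zero, lie_lie_zero, sub_zero]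

theorem normalizer_eq_top_iff {N : LieSubmodule R K M} :
    N.normalizer = ⊤ ↔ ⁅(⊤ : LieIdeal R K), (⊤ : LieSubmodule R K M)⁆ ≤ N := by
  rw [LieSubmodule.top_lie_le_iff_le_normalizer, top_le_iff]

theorem lie_eq_zero_of_mem_center {z : K} (hz : z ∈ LieAlgebra.center R K) (x : K) :
    ⁅z, x⁆ = 0 := by
  rw [← lie_skew, (LieModule.mem_maxTrivSubmodule R K K z).1 hz, neg_zero]

end SecondCenter

namespace IsComplexStructure

variable {J : L →ₗ[ℝ] L} {z : L}

theorem lie_map_map_of_mem_center (hJ : IsComplexStructure J)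
    (hz : z ∈ LieAlgebra.center ℝ L) (x : L) : ⁅J x, J z⁆ = J ⁅x, J z⁆ := by
  have lie_z := (LieModule.mem_maxTrivSubmodule ℝ L L z).1 hz
  have nijenhuis := hJ.2 x z
  rw [lie_z, lie_z, zero_add, zero_add] at nijenhuis
  exact (sub_eq_zero.1 nijenhuis).symm

theorem dcForm_map_of_mem_center (hJ : IsComplexStructure J) (B : LinearMap.BilinForm ℝ L)
    (hz : z ∈ LieAlgebra.center ℝ L) (hJz : J z ∈ (LieAlgebra.center ℝ L).normalizer) (w u : L) :
    dcForm J B w u z (J z) = B (J ⁅u, J z⁆) ⁅w, J z⁆ - B (J ⁅w, J z⁆) ⁅u, J z⁆ := by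
  have z_lie := lie_eq_zero_of_mem_center hz
  have lie_z := (LieModule.mem_maxTrivSubmodule ℝ L L z).1 hz
  have J_lie := hJ.lie_map_map_of_mem_center hz
  have J_lie_central (x : L) : J ⁅x, J z⁆ ∈ LieAlgebra.center ℝ L :=
    J_lie x ▸ hJz (J x)
  have J_lie_lie (x y : L) : ⁅J ⁅x, J z⁆, y⁆ = 0 := lie_eq_zero_of_mem_center (J_lie_central x) y
  have lie_J_lie (x y : L) : ⁅y, J ⁅x, J z⁆⁆ = 0 :=
    (LieModule.mem_maxTrivSubmodule ℝ L L _).1 (J_lie_central x) y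
  have J_commutator_lie (x y : L) : ⁅J ⁅x, y⁆, J z⁆ = 0 := by
    rw [J_lie, lie_lie_eq_zero_of_mem_normalizer_maxTrivSubmodule hJz, map_zero]
  simp only [dcForm, hJ.1 z, z_lie, lie_z, J_lie_lie, lie_J_lie, J_commutator_lie, J_lie,
    neg_lie, lie_neg, zero_lie, lie_zero, map_zero, LinearMap.zero_apply, neg_zero]
  ring

theorem dcForm_map_map_of_mem_center (hJ : IsComplexStructure J) {B : LinearMap.BilinForm ℝ L}
    (hBJ : ∀ x y : L, B (J x) (J y) = B x y) (hz : z ∈ LieAlgebra.center ℝ L)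
    (hJz : J z ∈ (LieAlgebra.center ℝ L).normalizer) (x : L) :
    dcForm J B x (J x) z (J z) = -2 * B ⁅x, J z⁆ ⁅x, J z⁆ := by
  rw [hJ.dcForm_map_of_mem_center B hz hJz, hJ.lie_map_map_of_mem_center hz, hBJ, hJ.1,
    map_neg, LinearMap.neg_apply]
  ring

end IsComplexStructure

theorem IsPluriclosed.map_mem_center {J : L →ₗ[ℝ] L} {B : LinearMap.BilinForm ℝ L}
    (hP : IsPluriclosed J B) (hJ : IsComplexStructure J) (hB : IsHermitianMetric J B) {z : L}
    (hz : z ∈ LieAlgebra.center ℝ L) (hJz : J z ∈ (LieAlgebra.center ℝ L).normalizer) :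
    J z ∈ LieAlgebra.center ℝ L := by
  obtain ⟨-, hpos, hBJ⟩ := hB
  refine (LieModule.mem_maxTrivSubmodule ℝ L L _).2 fun x ↦ ?_
  by_contra hne
  have norm_sq_pos := hpos _ hne
  have dc_eq := hJ.dcForm_map_map_of_mem_center hBJ hz hJz x
  rw [hP] at dc_eq
  linarith

theorem no_pluriclosed_metric_of_three_step_general
    (J : L →ₗ[ℝ] L) (hJ : IsComplexStructure J)
    (hJ3 : ¬ Submodule.map J (LieAlgebra.center ℝ L : Submodule ℝ L) ⊓
        ((LieAlgebra.center ℝ L).normalizer : Submodule ℝ L) ≤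
      (LieAlgebra.center ℝ L : Submodule ℝ L))
    (B : LinearMap.BilinForm ℝ L) (hB : IsHermitianMetric J B) :
    ¬ IsPluriclosed J B := by
  refine fun hP ↦ hJ3 ?_
  rintro _ ⟨⟨z, hz, rfl⟩, hJz⟩
  exact hP.map_mem_center hJ hB hz hJz

/-- if `J` is a 3-step complex structure (`J𝔫' ⊄ 𝔷`) on a 2-step
nilpotent Lie algebra, then no Hermitian metric on `(𝔫, J)` is pluriclosed. -/
theorem no_pluriclosed_metric_of_three_step
    (h2 : commutatorIdeal L ≤ LieAlgebra.center ℝ L)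
    (hna : commutatorIdeal L ≠ ⊥)
    (J : L →ₗ[ℝ] L) (hJ : IsComplexStructure J)
    (hJ3 : ¬ Submodule.map J (commutatorIdeal L : Submodule ℝ L) ≤
      (LieAlgebra.center ℝ L : Submodule ℝ L))
    (B : LinearMap.BilinForm ℝ L) (hB : IsHermitianMetric J B) :
    ¬ IsPluriclosed J B := by
  refine no_pluriclosed_metric_of_three_step_general J hJ (fun h ↦ hJ3 (le_trans ?_ h)) B hB
  exact le_inf (Submodule.map_mono h2) (by simp [normalizer_eq_top_iff.2 h2])
end
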